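/- arXiv:2509.05524 — 6 statements merged into one kernel-verified Lean document; each statement's English description precedes it below -/
import Mathlib

section
/- Let 𝒳 be a nonempty compact metrizable totally disconnected topological space with a compatible metric d, and let f : 𝒳 → 𝒳 be a continuous map. Then f is expansive — i.e., there exists δ > 0 such that whenever x, y ∈ 𝒳 satisfy d(fⁿ(x), fⁿ(y)) < δ for all n ∈ ℕ, one has x = y — if and only if (f, 𝒳) is topologically conjugate to a one-sided subshift: there exist a finite alphabet A, a subshift F ⊆ A^ℕ, and a homeomorphism h : 𝒳 → F such that h ∘ f = σ ∘ h. -/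
/-!
A point of `X` is coded by its itinerary through a finite clopen partition. If `f` is expansive
with constant `δ`, zero-dimensionality and compactness give a continuous `g : X → Fin m` whose
fibres have pairwise distances `< δ` (`exists_continuous_fin_of_pos`). The itinerary map
`x ↦ (g (fⁿ x))ₙ` is continuous, intertwines `f` with the shift, and is injective by expansivity;
since `X` is compact, it is a homeomorphism onto a closed shift-invariant set.
Conversely, for a conjugacy `h`, the coordinate `x ↦ (h x) 0` is continuous into a
discrete space, hence by compactness constant on balls of some radius `δ`; as
`(h x) n = (h (fⁿ x)) 0`, two orbits that
stay `δ`-close have the same code.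
-/

/-- The one-sided shift map on `ℕ → A`: `σ(x)(n) = x(n+1)`. -/
def oneSidedShift {A : Type*} (x : ℕ → A) : ℕ → A := fun n => x (n + 1)

/-- A compact totally disconnected metric space has a finite clopen partition, given by the fibres
of `g`, into pieces any two points of which are at distance `< δ`. -/
theorem exists_continuous_fin_of_pos {X : Type*} [MetricSpace X] [CompactSpace X]
    [TotallyDisconnectedSpace X] {δ : ℝ} (hδ : 0 < δ) :
    ∃ (m : ℕ) (g : X → Fin m), Continuous g ∧ ∀ x y, g x = g y → dist x y < δ := by
  have hU : ∀ x : X, ∃ U : Set X, IsClopen U ∧ x ∈ U ∧ U ⊆ Metric.ball x (δ / 2) := fun x =>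
    compact_exists_isClopen_in_isOpen Metric.isOpen_ball (Metric.mem_ball_self (half_pos hδ))
  choose U hUc hxU hUb using hU
  obtain ⟨t, ht⟩ := isCompact_univ.elim_finite_subcover U (fun x => (hUc x).isOpen)
    (fun x _ => Set.mem_iUnion.2 ⟨x, hxU x⟩)
  -- The piece containing `x` is determined by which members of the subcover contain `x`.
  let k : X → (t → Bool) := fun x i => (U i).boolIndicator x
  have hk : Continuous k :=
    continuous_pi fun i => (continuous_boolIndicator_iff_isClopen (U i)).2 (hUc i)
  refine ⟨_, fun x => Finite.equivFin (t → Bool) (k x),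
    continuous_of_discreteTopology.comp hk, fun x y hxy => ?_⟩
  have hkxy : k x = k y := (Finite.equivFin (t → Bool)).injective hxy
  obtain ⟨i, hi, hx⟩ := Set.mem_iUnion₂.1 (ht (Set.mem_univ x))
  have hy : y ∈ U i := by
    rw [Set.mem_iff_boolIndicator] at hx ⊢
    rw [← hx]
    exact (congrFun hkxy ⟨i, hi⟩).symm
  have h1 := Metric.mem_ball.1 (hUb i hx)
  have h2 := Metric.mem_ball.1 (hUb i hy)
  linarith [dist_triangle_right x y i]

/-- A continuous self-map of a nonempty compact metrizable totally disconnected space is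
expansive if and only if it is topologically conjugate to a one-sided subshift. -/
theorem expansive_iff_conjugate_subshift {X : Type*} [MetricSpace X] [CompactSpace X]
    [TotallyDisconnectedSpace X] [Nonempty X] (f : X → X) (hf : Continuous f) :
    (∃ δ : ℝ, 0 < δ ∧ ∀ x y : X, (∀ n : ℕ, dist (f^[n] x) (f^[n] y) < δ) → x = y) ↔
      ∃ (m : ℕ) (F : Set (ℕ → Fin m)), IsClosed F ∧ (∀ x ∈ F, oneSidedShift x ∈ F) ∧
        ∃ h : X ≃ₜ F, ∀ x : X, (h (f x) : ℕ → Fin m) = oneSidedShift (h x : ℕ → Fin m) := by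
  constructor
  · rintro ⟨δ, hδ, hexp⟩
    obtain ⟨m, g, hg, hgδ⟩ := exists_continuous_fin_of_pos (X := X) hδ
    let c : X → ℕ → Fin m := fun x n => g (f^[n] x)
    have hc : Continuous c := continuous_pi fun n => hg.comp (hf.iterate n)
    have hinj : Function.Injective c := fun x y hxy =>
      hexp x y fun n => hgδ _ _ (congrFun hxy n)
    have hemb := hc.isClosedEmbedding hinj
    refine ⟨m, Set.range c, hemb.isClosed_range, ?_, hemb.isEmbedding.toHomeomorph, fun x => rfl⟩
    rintro _ ⟨x, rfl⟩
    exact ⟨f x, rfl⟩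
  · rintro ⟨m, F, -, -, h, hh⟩
    let p : X → Fin m := fun x => (h x : ℕ → Fin m) 0
    have hp : Continuous p :=
      (continuous_apply 0).comp (continuous_subtype_val.comp h.continuous)
    have hcode : ∀ (n : ℕ) (x : X), (h x : ℕ → Fin m) n = p (f^[n] x) := by
      intro n
      induction n with
      | zero => exact fun x => rfl
      | succ n ih =>
        intro x
        rw [Function.iterate_succ_apply, ← ih, hh]
        rfl
    -- The fibres of `p` form an open cover, and `δ` is a Lebesgue number for it.
    obtain ⟨δ, hδ, hball⟩ := lebesgue_number_lemma_of_metric (c := fun i : Fin m => p ⁻¹' {i})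
      isCompact_univ (fun i => (isOpen_discrete {i}).preimage hp)
      (fun x _ => Set.mem_iUnion.2 ⟨p x, rfl⟩)
    refine ⟨δ, hδ, fun x y hxy => h.injective (Subtype.ext (funext fun n => ?_))⟩
    rw [hcode, hcode]
    obtain ⟨i, hi⟩ := hball (f^[n] y) (Set.mem_univ _)
    have hx : p (f^[n] x) = i := hi (Metric.mem_ball.2 (hxy n))
    have hy : p (f^[n] y) = i := hi (Metric.mem_ball_self hδ)
    rw [hx, hy]
end

section
/- Let 𝒳 be a nonempty compact metrizable totally disconnected topological space with a compatible metric d, and let f : 𝒳 → 𝒳 be a continuous map. Then f is expansive (there exists δ > 0 such that d(fⁿ(x), fⁿ(y)) < δ for all n ∈ ℕ implies x = y) and f is an open map if and only if (f, 𝒳) is topologically conjugate to a one-sided subshift of finite type: there exist a finite alphabet A, a finite set P of finite words over A, and a homeomorphism h from 𝒳 onto the subshift 𝓕_P ⊆ A^ℕ such that h ∘ f = σ ∘ h. -/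
/-- The finite word `w` occurs in the sequence `x` (at some position). -/
def OccursIn {A : Type*} (w : List A) (x : ℕ → A) : Prop :=
  ∃ i : ℕ, ∀ j : ℕ, ∀ hj : j < w.length, x (i + j) = w.get ⟨j, hj⟩

/-- The subshift defined by the set `P` of prohibited words. -/
def subshiftOfForbidden {A : Type*} (P : Set (List A)) : Set (ℕ → A) :=
  {x | ∀ w ∈ P, ¬ OccursIn w x}

/-- The itinerary of a point with respect to the partition into the fibres of `α`. -/
def itinerary {X A : Type*} (f : X → X) (α : X → A) (x : X) : ℕ → A := fun n => α (f^[n] x)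

theorem itinerary_apply_map {X A : Type*} (f : X → X) (α : X → A) (x : X) (n : ℕ) :
    itinerary f α (f x) n = itinerary f α x (n + 1) := by
  simp [itinerary, Function.iterate_succ_apply]

theorem itinerary_iterate {X A : Type*} (f : X → X) (α : X → A) (x : X) (i n : ℕ) :
    itinerary f α (f^[i] x) n = itinerary f α x (i + n) := by
  simp only [itinerary, ← Function.iterate_add_apply, add_comm]

theorem continuous_itinerary {X A : Type*} [TopologicalSpace X] [TopologicalSpace A]
    {f : X → X} {α : X → A} (hf : Continuous f) (hα : Continuous α) :
    Continuous (itinerary f α) :=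
  continuous_pi fun n => hα.comp (hf.iterate n)

/-! ### Expansive open maps are subshifts of finite type -/

/-- A compact totally disconnected metric space has finite clopen partitions of arbitrarily small
mesh, here encoded by the continuous map to the finite set of pieces. -/
theorem exists_fine_partition {X : Type*} [MetricSpace X] [CompactSpace X]
    [TotallyDisconnectedSpace X] {δ : ℝ} (hδ : 0 < δ) :
    ∃ (m : ℕ) (α : X → Fin m), Continuous α ∧ ∀ x y, α x = α y → dist x y < δ := by
  classical
  have h1 : ∀ x : X, ∃ V : Set X, IsClopen V ∧ x ∈ V ∧ V ⊆ Metric.ball x (δ / 2) := fun x =>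
    compact_exists_isClopen_in_isOpen Metric.isOpen_ball (Metric.mem_ball_self (half_pos hδ))
  choose V hV hxV hVb using h1
  obtain ⟨t, ht⟩ := isCompact_univ.elim_finite_subcover V (fun x => (hV x).isOpen)
    (fun x _ => Set.mem_iUnion.2 ⟨x, hxV x⟩)
  -- The pieces are the atoms of the Boolean algebra generated by the cover `V i`, `i ∈ t`.
  let β : X → (t → Bool) := fun x i => decide (x ∈ V i)
  have hβ : Continuous β := by
    refine continuous_pi fun i => ?_
    refine (IsLocallyConstant.iff_isOpen_fiber_apply.2 fun x => ?_).continuous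
    by_cases hx : x ∈ V i
    · convert (hV i).isOpen using 1
      ext y
      simp [β, hx]
    · convert (hV i).compl.isOpen using 1
      ext y
      simp [β, hx]
  refine ⟨_, fun x => Fintype.equivFin _ (β x), continuous_of_discreteTopology.comp hβ, ?_⟩
  intro x y hxy
  have hxy' : β x = β y := (Fintype.equivFin _).injective hxy
  obtain ⟨i, hi, hxi⟩ : ∃ i ∈ t, x ∈ V i := by simpa using ht (Set.mem_univ x)
  have hyi : y ∈ V i := by
    have := congrFun hxy' ⟨i, hi⟩
    simpa [β, hxi] using this
  have a := Metric.mem_ball.1 (hVb i hxi)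
  have b := Metric.mem_ball.1 (hVb i hyi)
  linarith [dist_triangle_right x y i]

theorem itinerary_injective {X A : Type*} [MetricSpace X] {f : X → X} {α : X → A} {δ : ℝ}
    (hexp : ∀ x y : X, (∀ n : ℕ, dist (f^[n] x) (f^[n] y) < δ) → x = y)
    (hα : ∀ x y, α x = α y → dist x y < δ) : Function.Injective (itinerary f α) :=
  fun x y hxy => hexp x y fun n => hα _ _ (congrFun hxy n)

/-- For an injective continuous map into a sequence space, long agreement of the images forces the
pair of points into any prescribed neighbourhood of the diagonal. -/
theorem exists_agree_subset {X : Type*} [TopologicalSpace X] [CompactSpace X] {m : ℕ}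
    {g : X → ℕ → Fin m} (hg : Continuous g) (hinj : Function.Injective g)
    {U : Set (X × X)} (hU : IsOpen U) (hdiag : ∀ x, (x, x) ∈ U) :
    ∃ k : ℕ, ∀ x y, (∀ j < k, g x j = g y j) → (x, y) ∈ U := by
  let E : ℕ → Set (X × X) := fun n => ⋂ j, ⋂ _ : j < n, {p | g p.1 j = g p.2 j}
  have hE : ∀ n, IsClosed (E n) := fun n => isClosed_iInter fun j => isClosed_iInter fun _ =>
    isClosed_eq ((continuous_apply j).comp (hg.comp continuous_fst))
      ((continuous_apply j).comp (hg.comp continuous_snd))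
  have hanti : Antitone E := fun a b hab p hp => by
    simp only [E, Set.mem_iInter, Set.mem_ofPred_eq] at hp ⊢
    exact fun j hj => hp j (hj.trans_le hab)
  obtain ⟨k, hk⟩ := hU.isClosed_compl.isCompact.elim_directed_family_closed E hE
    (by
      ext ⟨x, y⟩
      simp only [E, Set.mem_inter_iff, Set.mem_compl_iff, Set.mem_iInter, Set.mem_ofPred_eq,
        Set.mem_empty_iff_false, iff_false, not_and]
      intro hxy hall
      have : x = y := hinj (funext fun j => hall (j + 1) j j.lt_succ_self)
      exact hxy (this ▸ hdiag x))
    hanti.directed_ge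
  refine ⟨k, fun x y hxy => ?_⟩
  by_contra hnot
  have : (x, y) ∈ Uᶜ ∩ E k := ⟨hnot, by simpa [E] using hxy⟩
  rw [hk] at this
  exact this

/-- For an open map with injective itineraries, whether a point has a preimage with symbol `a`
depends only on an initial segment, of uniform length, of its itinerary. -/
theorem exists_window {X : Type*} [MetricSpace X] [CompactSpace X] {m : ℕ} {f : X → X}
    {α : X → Fin m} (hf : Continuous f) (hα : Continuous α) (hopen : IsOpenMap f)
    (hinj : Function.Injective (itinerary f α)) :
    ∃ k : ℕ, ∀ x z, (∀ j < k, itinerary f α (f x) j = itinerary f α z j) →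
      ∃ y, f y = z ∧ α y = α x := by
  let S : Fin m → Set X := fun a => f '' (α ⁻¹' {a})
  have hS : ∀ a, IsClopen (S a) := fun a =>
    ⟨(((isClosed_singleton.preimage hα).isCompact).image hf).isClosed,
      hopen _ ((isOpen_discrete {a}).preimage hα)⟩
  have hU : IsOpen (⋂ a, (S a ×ˢ S a ∪ (S a)ᶜ ×ˢ (S a)ᶜ)) := isOpen_iInter_of_finite fun a =>
    ((hS a).isOpen.prod (hS a).isOpen).union ((hS a).compl.isOpen.prod (hS a).compl.isOpen)
  obtain ⟨k, hk⟩ := exists_agree_subset (continuous_itinerary hf hα) hinj hU (fun x => by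
    simp only [Set.mem_iInter, Set.mem_union, Set.mem_prod, Set.mem_compl_iff]
    exact fun a => by tauto)
  refine ⟨k, fun x z hxz => ?_⟩
  have h1 := Set.mem_iInter.1 (hk _ _ hxz) (α x)
  have h2 : f x ∈ S (α x) := ⟨x, rfl, rfl⟩
  obtain h3 | h3 := h1
  · obtain ⟨y, hy, hyz⟩ := h3.2
    exact ⟨y, hyz, hy⟩
  · exact absurd h2 h3.1

theorem conjugate_of_expansive_open {X : Type*} [MetricSpace X] [CompactSpace X]
    [TotallyDisconnectedSpace X] {f : X → X} (hf : Continuous f) {δ : ℝ} (hδ : 0 < δ)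
    (hexp : ∀ x y : X, (∀ n : ℕ, dist (f^[n] x) (f^[n] y) < δ) → x = y)
    (hopen : IsOpenMap f) :
    ∃ (m : ℕ) (P : Finset (List (Fin m)))
        (h : X ≃ₜ subshiftOfForbidden (P : Set (List (Fin m)))),
      ∀ x : X, (h (f x) : ℕ → Fin m) = oneSidedShift (h x : ℕ → Fin m) := by
  obtain ⟨m, α, hα, hfine⟩ := exists_fine_partition (X := X) hδ
  have hinj := itinerary_injective hexp hfine
  have hcont := continuous_itinerary hf hα
  obtain ⟨k, hk⟩ := exists_window hf hα hopen hinj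
  -- The forbidden words: those of length `k + 1` at the start of no itinerary.
  have hfin : {w : List (Fin m) | w.length = k + 1 ∧
      ∀ x, ¬ ∀ j, ∀ hj : j < w.length, itinerary f α x j = w.get ⟨j, hj⟩}.Finite :=
    (List.finite_length_eq (Fin m) (k + 1)).subset fun w hw => hw.1
  have hmem : ∀ x, itinerary f α x ∈ subshiftOfForbidden (hfin.toFinset : Set (List (Fin m))) := by
    rintro x w hw ⟨i, hi⟩
    refine (hfin.mem_toFinset.1 hw).2 (f^[i] x) fun j hj => ?_
    rw [itinerary_iterate]
    exact hi j hj
  have hsurj : ∀ u ∈ subshiftOfForbidden (hfin.toFinset : Set (List (Fin m))),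
      ∃ x, itinerary f α x = u := by
    intro u hu
    have hshort : ∀ i, ∃ x, ∀ j < k + 1, itinerary f α x j = u (i + j) := by
      intro i
      by_contra hno
      refine hu (List.ofFn fun j : Fin (k + 1) => u (i + j)) ?_
        ⟨i, fun j hj => by simp only [List.get_eq_getElem, List.getElem_ofFn]⟩
      simp only [Set.Finite.coe_toFinset, Set.mem_ofPred_eq, List.length_ofFn, true_and]
      exact fun x hx => hno ⟨x, fun j hj => by
        simpa only [List.get_eq_getElem, List.getElem_ofFn] using hx j hj⟩
    have hlong : ∀ N i, ∃ x, ∀ j < k + 1 + N, itinerary f α x j = u (i + j) := by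
      intro N
      induction N with
      | zero => exact hshort
      | succ N ih =>
        intro i
        obtain ⟨z, hz⟩ := ih (i + 1)
        obtain ⟨x, hx⟩ := hshort i
        obtain ⟨y, rfl, hy⟩ := hk x z fun j hj => by
          rw [itinerary_apply_map, hx (j + 1) (by omega), hz j (by omega)]
          congr 1
          omega
        refine ⟨y, fun j hj => ?_⟩
        cases j with
        | zero => exact hy.trans (hx 0 (by omega))
        | succ j =>
          rw [← itinerary_apply_map, hz j (by omega)]
          congr 1
          omega
    choose p hp using fun N => hlong N 0
    have hclosed : IsClosed (Set.range (itinerary f α)) := (isCompact_range hcont).isClosed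
    change u ∈ Set.range (itinerary f α)
    refine hclosed.mem_of_tendsto (f := fun N => itinerary f α (p N)) (b := Filter.atTop) ?_
      (Filter.Eventually.of_forall fun N => ⟨p N, rfl⟩)
    refine tendsto_pi_nhds.2 fun j => tendsto_const_nhds.congr' ?_
    filter_upwards [Filter.eventually_ge_atTop j] with N hN
    rw [hp N j (by omega), zero_add]
  let e : X ≃ subshiftOfForbidden (hfin.toFinset : Set (List (Fin m))) :=
    Equiv.ofBijective (fun x => ⟨itinerary f α x, hmem x⟩)
      ⟨fun x y hxy => hinj (congrArg Subtype.val hxy), fun ⟨u, hu⟩ =>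
        (hsurj u hu).imp fun x hx => Subtype.ext hx⟩
  have he : Continuous e := hcont.subtype_mk hmem
  exact ⟨m, hfin.toFinset, he.homeoOfEquivCompactToT2, fun x =>
    funext fun n => itinerary_apply_map f α x n⟩

/-! ### Subshifts of finite type are expansive and open -/

/-- The zeroth symbol of a conjugacy into a sequence space is uniformly continuous, so orbits that
stay close have equal symbols. -/
theorem expansive_of_conjugate {X : Type*} [MetricSpace X] [CompactSpace X] {f : X → X} {m : ℕ}
    {g : X → ℕ → Fin m} (hg : Continuous g) (hinj : Function.Injective g)
    (hgf : ∀ x, g (f x) = oneSidedShift (g x)) :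
    ∃ δ : ℝ, 0 < δ ∧ ∀ x y : X, (∀ n : ℕ, dist (f^[n] x) (f^[n] y) < δ) → x = y := by
  have hc : Continuous fun x => (((g x 0 : Fin m) : ℕ) : ℝ) :=
    (continuous_of_discreteTopology (f := fun a : Fin m => ((a : ℕ) : ℝ))).comp
      ((continuous_apply 0).comp hg)
  obtain ⟨δ, hδ, h⟩ := Metric.uniformContinuous_iff.1
    (CompactSpace.uniformContinuous_of_continuous hc) 1 one_pos
  have hit : ∀ n x, g (f^[n] x) 0 = g x n := by
    intro n
    induction n with
    | zero => exact fun x => rfl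
    | succ n ih => exact fun x => by rw [Function.iterate_succ_apply, ih, hgf]; rfl
  refine ⟨δ, hδ, fun x y hxy => hinj (funext fun n => ?_)⟩
  have h1 := h (hxy n)
  rw [hit, hit, Real.dist_eq] at h1
  have h2 : |((g x n : ℕ) : ℤ) - ((g y n : ℕ) : ℤ)| < 1 := by exact_mod_cast h1
  rw [Int.abs_lt_one_iff] at h2
  exact Fin.ext (by omega)

/-- In a subshift whose forbidden words have length at most `K`, a symbol that may precede `u` may
also precede any `v` sharing with `u` its first `K` symbols. -/
theorem cons_mem_subshift {A : Type*} {P : Set (List A)} {K : ℕ} (hK : ∀ w ∈ P, w.length ≤ K)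
    {u v c : ℕ → A} (hu : u ∈ subshiftOfForbidden P) (hv : v ∈ subshiftOfForbidden P)
    (hc0 : c 0 = u 0) (hcv : ∀ n, c (n + 1) = v n) (huv : ∀ j < K, v j = u (j + 1)) :
    c ∈ subshiftOfForbidden P := by
  rintro w hw ⟨i, hi⟩
  cases i with
  | zero =>
    refine hu w hw ⟨0, fun j hj => ?_⟩
    rw [← hi j hj, zero_add]
    cases j with
    | zero => exact hc0.symm
    | succ j => rw [hcv, huv j (by have := hK w hw; omega)]
  | succ i =>
    refine hv w hw ⟨i, fun j hj => ?_⟩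
    rw [← hi j hj, ← hcv]
    congr 1
    omega

/-- Cylinders form a neighbourhood basis for the topology induced from a sequence space. -/
theorem mem_nhds_iff_agree {X : Type*} [TopologicalSpace X] {m : ℕ} {g : X → ℕ → Fin m}
    (hg : Topology.IsInducing g) {x : X} {S : Set X} :
    S ∈ nhds x ↔ ∃ n, ∀ y, (∀ j < n, g y j = g x j) → y ∈ S := by
  rw [hg.nhds_eq_comap, Filter.mem_comap]
  constructor
  · rintro ⟨T, hT, hTS⟩
    obtain ⟨C, ⟨z, n, rfl⟩, hxC, hCT⟩ :=
      (PiNat.isTopologicalBasis_cylinders (fun _ : ℕ => Fin m)).mem_nhds_iff.1 hT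
    exact ⟨n, fun y hy => hTS (hCT fun j hj => (hy j hj).trans (hxC j hj))⟩
  · rintro ⟨n, hn⟩
    exact ⟨PiNat.cylinder (g x) n, (PiNat.isOpen_cylinder _ _ _).mem_nhds
      (PiNat.self_mem_cylinder _ _), fun y hy => hn y hy⟩

theorem isOpenMap_of_conjugate {X : Type*} [TopologicalSpace X] {f : X → X} {m : ℕ}
    {P : Finset (List (Fin m))} (h : X ≃ₜ subshiftOfForbidden (P : Set (List (Fin m))))
    (hh : ∀ x : X, (h (f x) : ℕ → Fin m) = oneSidedShift (h x : ℕ → Fin m)) :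
    IsOpenMap f := by
  have hind : Topology.IsInducing fun x => (h x : ℕ → Fin m) :=
    Topology.IsInducing.subtypeVal.comp h.isInducing
  refine IsOpenMap.of_nhds_le fun x S hS => ?_
  obtain ⟨n, hn⟩ := (mem_nhds_iff_agree hind).1 (Filter.mem_map.1 hS)
  refine (mem_nhds_iff_agree hind).2 ⟨max n (P.sup List.length), fun y hy => ?_⟩
  have hy' : ∀ j < max n (P.sup List.length),
      (h y : ℕ → Fin m) j = (h x : ℕ → Fin m) (j + 1) := fun j hj => by
    rw [hy j hj, hh]; rfl
  let c : ℕ → Fin m := fun i => Nat.casesOn i ((h x : ℕ → Fin m) 0) (h y : ℕ → Fin m)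
  have hc : c ∈ subshiftOfForbidden (P : Set (List (Fin m))) :=
    cons_mem_subshift (fun w hw => Finset.le_sup (f := List.length) hw) (h x).2 (h y).2 rfl
      (fun _ => rfl) (fun j hj => hy' j (hj.trans_le (le_max_right _ _)))
  have hfy : f (h.symm ⟨c, hc⟩) = y := by
    refine h.injective (Subtype.ext ?_)
    rw [hh, h.apply_symm_apply]
    rfl
  have hmem : h.symm ⟨c, hc⟩ ∈ f ⁻¹' S := hn _ fun j hj => by
    simp only [h.apply_symm_apply]
    cases j with
    | zero => rfl
    | succ j => exact hy' j (lt_of_lt_of_le (by omega) (le_max_left _ _))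
  exact hfy ▸ hmem

/-- A continuous self-map of a nonempty compact metrizable totally disconnected space is
expansive and open if and only if it is topologically conjugate to a one-sided subshift
of finite type. -/
theorem expansive_open_iff_conjugate_SFT {X : Type*} [MetricSpace X] [CompactSpace X]
    [TotallyDisconnectedSpace X] [Nonempty X] (f : X → X) (hf : Continuous f) :
    ((∃ δ : ℝ, 0 < δ ∧ ∀ x y : X, (∀ n : ℕ, dist (f^[n] x) (f^[n] y) < δ) → x = y) ∧
        IsOpenMap f) ↔
      ∃ (m : ℕ) (P : Finset (List (Fin m)))
          (h : X ≃ₜ subshiftOfForbidden (P : Set (List (Fin m)))),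
        ∀ x : X, (h (f x) : ℕ → Fin m) = oneSidedShift (h x : ℕ → Fin m) := by
  constructor
  · rintro ⟨⟨δ, hδ, hexp⟩, hopen⟩
    exact conjugate_of_expansive_open hf hδ hexp hopen
  · rintro ⟨m, P, h, hh⟩
    exact ⟨expansive_of_conjugate (continuous_subtype_val.comp h.continuous)
      (Subtype.val_injective.comp h.injective) hh, isOpenMap_of_conjugate h hh⟩
end

section
/- Let A be a finite alphabet and let 𝒳 ⊆ A^ℕ be a subshift such that the restricted shift map σ : 𝒳 → 𝒳 is an open map (with respect to the subspace topology on 𝒳). Then there exists m ∈ ℕ such that 𝒳 = {x ∈ A^ℕ : for every i ∈ ℕ, the word x(i)x(i+1)…x(i+m) occurs in some element of 𝒳}. In particular, 𝒳 is a subshift of finite type (it equals 𝓕_P for the finite set P of words of length m+1 that do not occur in any element of 𝒳). -/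
/-- Every neighbourhood of a sequence contains a cylinder around it. -/
lemma exists_cylinder_of_isOpen {A : Type*} [TopologicalSpace A] [DiscreteTopology A]
    {U : Set (ℕ → A)} (hU : IsOpen U) {x : ℕ → A} (hx : x ∈ U) :
    ∃ n : ℕ, ∀ y : ℕ → A, (∀ j < n, y j = x j) → y ∈ U := by
  obtain ⟨_, ⟨z, n, rfl⟩, hxz, hsub⟩ :=
    (PiNat.isTopologicalBasis_cylinders (fun _ : ℕ => A)).exists_subset_of_mem_open hx hU
  refine ⟨n, fun y hy => hsub ?_⟩
  rw [PiNat.mem_cylinder_iff] at hxz ⊢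
  exact fun j hj => (hy j hj).trans (hxz j hj)

/-- If the shift is open on the subshift `𝒳`, there is a single `m` such that the first letter of
any `x ∈ 𝒳` can be put in front of any `z ∈ 𝒳` whose first `m` letters are those of `σ x`. -/
lemma exists_uniform_prepend {A : Type*} [Finite A] [TopologicalSpace A] [DiscreteTopology A]
    (𝒳 : Set (ℕ → A)) (hclosed : IsClosed 𝒳) (hinv : ∀ x ∈ 𝒳, oneSidedShift x ∈ 𝒳)
    (hopen : IsOpenMap (fun x : 𝒳 => (⟨oneSidedShift x.1, hinv x.1 x.2⟩ : 𝒳))) :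
    ∃ m : ℕ, ∀ x ∈ 𝒳, ∀ z ∈ 𝒳, (∀ j < m, z j = x (j + 1)) →
      ∃ w ∈ 𝒳, w 0 = x 0 ∧ oneSidedShift w = z := by
  refine hclosed.isCompact.induction_on
    (p := fun s => ∃ m : ℕ, ∀ x ∈ s, ∀ z ∈ 𝒳, (∀ j < m, z j = x (j + 1)) →
      ∃ w ∈ 𝒳, w 0 = x 0 ∧ oneSidedShift w = z) ⟨0, by simp⟩ ?_ ?_ ?_
  · rintro s t hst ⟨m, hm⟩
    exact ⟨m, fun x hx => hm x (hst hx)⟩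
  · rintro s t ⟨m, hm⟩ ⟨n, hn⟩
    refine ⟨max m n, ?_⟩
    rintro x (hx | hx) z hz h
    · exact hm x hx z hz fun j hj => h j (lt_max_of_lt_left hj)
    · exact hn x hx z hz fun j hj => h j (lt_max_of_lt_right hj)
  · intro x hx
    have hV : IsOpen {y : 𝒳 | y.1 0 = x 0} :=
      (isOpen_discrete {x 0}).preimage
        (show Continuous fun y : 𝒳 => y.1 0 from (continuous_apply 0).comp continuous_subtype_val)
    obtain ⟨U, hU, hUeq⟩ := isOpen_induced_iff.1 (hopen _ hV)
    have hxU : oneSidedShift x ∈ U := by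
      have : (⟨oneSidedShift x, hinv x hx⟩ : 𝒳) ∈ Subtype.val ⁻¹' U := by
        rw [hUeq]; exact ⟨⟨x, hx⟩, rfl, rfl⟩
      exact this
    obtain ⟨n, hn⟩ := exists_cylinder_of_isOpen hU hxU
    -- On the cylinder of the first `n + 1` letters of `x`, both the letter to prepend and the
    -- agreement condition are those of `x`, so `n` works on all of it.
    refine ⟨PiNat.cylinder x (n + 1), mem_nhdsWithin_of_mem_nhds
      ((PiNat.isOpen_cylinder _ x (n + 1)).mem_nhds (PiNat.self_mem_cylinder x (n + 1))), n, ?_⟩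
    intro y hy z hz hzy
    rw [PiNat.mem_cylinder_iff] at hy
    have hzU : (⟨z, hz⟩ : 𝒳) ∈ Subtype.val ⁻¹' U :=
      hn z fun j hj => (hzy j hj).trans (hy (j + 1) (by omega))
    rw [hUeq] at hzU
    obtain ⟨w, hw0, hwz⟩ := hzU
    exact ⟨w.1, w.2, hw0.trans (hy 0 (by omega)).symm, congrArg Subtype.val hwz⟩

lemma iterate_shift_mem {A : Type*} {𝒳 : Set (ℕ → A)} (hinv : ∀ x ∈ 𝒳, oneSidedShift x ∈ 𝒳)
    {y : ℕ → A} (hy : y ∈ 𝒳) (p : ℕ) : (fun j => y (p + j)) ∈ 𝒳 := by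
  induction p with
  | zero => simpa using hy
  | succ p ih =>
    have h : (fun j => y (p + 1 + j)) = oneSidedShift fun j => y (p + j) :=
      funext fun j => congrArg y (by omega)
    exact h ▸ hinv _ ih

/-- If first letters can be prepended along overlaps of length `m`, a sequence whose words of
length `m + 1` all occur in `𝒳` has each of its longer windows as an initial word of a point of
`𝒳`. -/
lemma exists_mem_agree_window {A : Type*} {𝒳 : Set (ℕ → A)}
    (hinv : ∀ x ∈ 𝒳, oneSidedShift x ∈ 𝒳) {m : ℕ}
    (hm : ∀ x ∈ 𝒳, ∀ z ∈ 𝒳, (∀ j < m, z j = x (j + 1)) →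
      ∃ w ∈ 𝒳, w 0 = x 0 ∧ oneSidedShift w = z) {x : ℕ → A}
    (hx : ∀ i : ℕ, ∃ y ∈ 𝒳, ∃ p : ℕ, ∀ j ≤ m, y (p + j) = x (i + j)) (n : ℕ) :
    ∀ i : ℕ, ∃ y ∈ 𝒳, ∀ j ≤ m + n, y j = x (i + j) := by
  have base : ∀ i : ℕ, ∃ y ∈ 𝒳, ∀ j ≤ m, y j = x (i + j) := fun i => by
    obtain ⟨y, hy, p, h⟩ := hx i
    exact ⟨_, iterate_shift_mem hinv hy p, h⟩
  induction n with
  | zero => exact base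
  | succ n ih =>
    intro i
    obtain ⟨y, hy, hyx⟩ := base i
    obtain ⟨z, hz, hzx⟩ := ih (i + 1)
    obtain ⟨w, hw, hw0, hwz⟩ := hm y hy z hz fun j hj => by
      rw [hzx j (by omega), hyx (j + 1) (by omega)]
      congr 1; omega
    refine ⟨w, hw, fun j hj => ?_⟩
    cases j with
    | zero => rw [hw0, hyx 0 (by omega)]
    | succ j =>
      rw [show w (j + 1) = z j from congrFun hwz j, hzx j (by omega)]
      congr 1; omega

/-- A subshift on which the shift map is open is a subshift of finite type: it is
determined by its words of length `m+1` for some `m`. -/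
theorem open_subshift_is_SFT {A : Type*} [Fintype A] [TopologicalSpace A] [DiscreteTopology A]
    (𝒳 : Set (ℕ → A)) (hclosed : IsClosed 𝒳) (hinv : ∀ x ∈ 𝒳, oneSidedShift x ∈ 𝒳)
    (hopen : IsOpenMap (fun x : 𝒳 => (⟨oneSidedShift x.1, hinv x.1 x.2⟩ : 𝒳))) :
    ∃ m : ℕ,
      𝒳 = {x : ℕ → A | ∀ i : ℕ, ∃ y ∈ 𝒳, ∃ p : ℕ, ∀ j ≤ m, y (p + j) = x (i + j)} ∧
      Set.Finite {w : List A | w.length = m + 1 ∧ ∀ x ∈ 𝒳, ¬ OccursIn w x} ∧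
      𝒳 = subshiftOfForbidden {w : List A | w.length = m + 1 ∧ ∀ x ∈ 𝒳, ¬ OccursIn w x} := by
  obtain ⟨m, hm⟩ := exists_uniform_prepend 𝒳 hclosed hinv hopen
  have key : ∀ x : ℕ → A,
      (∀ i : ℕ, ∃ y ∈ 𝒳, ∃ p : ℕ, ∀ j ≤ m, y (p + j) = x (i + j)) → x ∈ 𝒳 := by
    intro x hx
    by_contra hxX
    obtain ⟨n, hn⟩ := exists_cylinder_of_isOpen hclosed.isOpen_compl hxX
    obtain ⟨y, hy, hyx⟩ := exists_mem_agree_window hinv hm hx n 0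
    exact hn y (fun j hj => by simpa using hyx j (by omega)) hy
  refine ⟨m, ?_, (List.finite_length_eq A (m + 1)).subset fun w hw => hw.1, ?_⟩
  · exact Set.Subset.antisymm (fun x hx i => ⟨x, hx, i, fun _ _ => rfl⟩) key
  · refine Set.Subset.antisymm (fun x hx w hw => hw.2 x hx) fun x hx => key x fun i => ?_
    by_contra hno
    -- Otherwise the window of `x` at `i` is itself a prohibited word.
    refine hx (List.ofFn fun j : Fin (m + 1) => x (i + j)) ⟨by simp, ?_⟩ ⟨i, by simp [-List.ofFn_succ]⟩
    rintro y hy ⟨p, hp⟩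
    exact hno ⟨y, hy, p, fun j hj => by
      simpa [-List.ofFn_succ] using hp j (by simp only [List.length_ofFn]; omega)⟩
end

section
/- Let A be a finite alphabet, P a finite set of finite words over A, and 𝓕 = 𝓕_P ⊆ A^ℕ the associated one-sided subshift of finite type, with shift map σ. Then there exists n ∈ ℕ such that the image sets satisfy σ^{n+1}(𝓕) = σⁿ(𝓕) (and hence σᵐ(𝓕) = σⁿ(𝓕) for all m ≥ n), and σⁿ(𝓕) is again a subshift of finite type: σⁿ(𝓕) = 𝓕_{P'} for some finite set P' of finite words over A. -/
theorem iterate_shift_apply {A : Type*} (m : ℕ) (x : ℕ → A) (i : ℕ) :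
    oneSidedShift^[m] x i = x (i + m) := by
  induction m generalizing x with
  | zero => rfl
  | succ m ih => rw [Function.iterate_succ_apply, ih]; rfl

theorem iterate_shift_mem_s4 {A : Type*} {P : Set (List A)} (m : ℕ) {x : ℕ → A}
    (hx : x ∈ subshiftOfForbidden P) : oneSidedShift^[m] x ∈ subshiftOfForbidden P := by
  rintro w hw ⟨i, hi⟩
  refine hx w hw ⟨i + m, fun j hj => ?_⟩
  rw [← hi j hj, iterate_shift_apply]
  congr 1
  omega

theorem image_shift_antitone {A : Type*} (P : Set (List A)) :
    Antitone fun m : ℕ => oneSidedShift^[m] '' subshiftOfForbidden P := by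
  rintro a b hab _ ⟨x, hx, rfl⟩
  refine ⟨oneSidedShift^[b - a] x, iterate_shift_mem_s4 _ hx, ?_⟩
  rw [← Function.iterate_add_apply, Nat.add_sub_cancel' hab]

/-- Membership of a point of the subshift in the `m`-th image depends only on its first `L`
letters, where `L` bounds the lengths of the forbidden words. -/
theorem mem_image_of_agree {A : Type*} {P : Set (List A)} {L : ℕ}
    (hL : ∀ w ∈ P, w.length ≤ L) {m : ℕ} {y z : ℕ → A} (hy : y ∈ subshiftOfForbidden P)
    (hz : z ∈ oneSidedShift^[m] '' subshiftOfForbidden P) (h : ∀ i < L, z i = y i) :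
    y ∈ oneSidedShift^[m] '' subshiftOfForbidden P := by
  obtain ⟨x, hx, rfl⟩ := hz
  refine ⟨fun i => if i < m then x i else y (i - m), ?_, ?_⟩
  · rintro w hw ⟨i, hi⟩
    by_cases him : i < m
    · refine hx w hw ⟨i, fun j hj => ?_⟩
      rw [← hi j hj]
      have hl := hL w hw
      by_cases hjm : i + j < m
      · simp [hjm]
      · have := h (i + j - m) (by omega)
        rw [iterate_shift_apply, Nat.sub_add_cancel (by omega)] at this
        simpa [hjm] using this
    · refine hy w hw ⟨i - m, fun j hj => ?_⟩
      rw [← hi j hj]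
      simp only [if_neg (show ¬ i + j < m by omega)]
      congr 1
      omega
  · funext i
    rw [iterate_shift_apply]
    simp

/-- The images of a one-sided subshift of finite type under the iterates of the shift
eventually stabilize, and the eventual image is again a subshift of finite type. -/
theorem sft_image_stabilizes {A : Type*} [Fintype A] (P : Finset (List A)) :
    ∃ n : ℕ,
      oneSidedShift^[n + 1] '' subshiftOfForbidden (P : Set (List A)) =
        oneSidedShift^[n] '' subshiftOfForbidden (P : Set (List A)) ∧
      (∀ m : ℕ, n ≤ m →
        oneSidedShift^[m] '' subshiftOfForbidden (P : Set (List A)) =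
          oneSidedShift^[n] '' subshiftOfForbidden (P : Set (List A))) ∧
      ∃ P' : Finset (List A),
        oneSidedShift^[n] '' subshiftOfForbidden (P : Set (List A)) =
          subshiftOfForbidden (P' : Set (List A)) := by
  classical
  obtain ⟨L, hL⟩ : ∃ L, ∀ w ∈ (P : Set (List A)), w.length ≤ L :=
    ⟨P.sup List.length, fun w hw => Finset.le_sup (f := List.length) hw⟩
  set X := subshiftOfForbidden (P : Set (List A)) with hX
  let pre : (ℕ → A) → (Fin L → A) := fun y i => y i
  let W : ℕ → Set (Fin L → A) := fun m => pre '' (oneSidedShift^[m] '' X)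
  have hsub : ∀ m, oneSidedShift^[m] '' X ⊆ X := by
    rintro m _ ⟨x, hx, rfl⟩
    exact iterate_shift_mem_s4 m hx
  have hmem : ∀ m y, y ∈ X → pre y ∈ W m → y ∈ oneSidedShift^[m] '' X := by
    rintro m y hy ⟨z, hz, hzy⟩
    exact mem_image_of_agree hL hy hz fun i hi => congrFun hzy ⟨i, hi⟩
  have hW : Antitone W := fun a b hab => Set.image_mono (image_shift_antitone _ hab)
  obtain ⟨n, hn⟩ := WellFoundedGT.monotone_chain_condition
    (⟨fun m => OrderDual.toDual (W m), fun a b hab => hW hab⟩ : ℕ →o (Set (Fin L → A))ᵒᵈ)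
  have hn' : ∀ m, n ≤ m → W n = W m := fun m hm => hn m hm
  have hstab : ∀ m, n ≤ m → oneSidedShift^[m] '' X = oneSidedShift^[n] '' X := by
    refine fun m hm => (image_shift_antitone _ hm).antisymm fun y hy => ?_
    refine hmem m y (hsub n hy) ?_
    rw [← hn' m hm]
    exact ⟨y, hy, rfl⟩
  refine ⟨n, hstab _ n.le_succ, hstab, P ∪ (Set.toFinite (W n)ᶜ).toFinset.image List.ofFn, ?_⟩
  ext y
  constructor
  · intro hy w hw hocc
    rw [Finset.mem_coe, Finset.mem_union, Finset.mem_image] at hw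
    rcases hw with hw | ⟨f, hf, rfl⟩
    · exact hsub n hy w hw hocc
    · rw [Set.Finite.mem_toFinset] at hf
      obtain ⟨i, hi⟩ := hocc
      have hyi : oneSidedShift^[i] y ∈ oneSidedShift^[n] '' X := by
        obtain ⟨x, hx, rfl⟩ := hy
        refine ⟨oneSidedShift^[i] x, iterate_shift_mem_s4 i hx, ?_⟩
        rw [← Function.iterate_add_apply, ← Function.iterate_add_apply, add_comm]
      refine hf ⟨_, hyi, funext fun j => ?_⟩
      have := hi j (by simp)
      simp only [List.get_ofFn] at this
      simp only [pre, iterate_shift_apply]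
      rw [add_comm, this]
      rfl
  · intro hy
    refine hmem n y (fun w hw => hy w ?_) ?_
    · rw [Finset.mem_coe] at hw ⊢
      exact Finset.mem_union_left _ hw
    · by_contra hne
      refine hy (List.ofFn (pre y)) ?_ ⟨0, fun j hj => by simp [pre]⟩
      rw [Finset.mem_coe]
      refine Finset.mem_union_right _ (Finset.mem_image_of_mem _ ?_)
      rw [Set.Finite.mem_toFinset]
      exact hne
end

section
/- Let G be a finitely generated group acting by homeomorphisms on a Cantor set 𝒳 (a nonempty compact metrizable totally disconnected perfect space), and let d be a compatible metric on 𝒳. Then the following are equivalent: (a) the action is expansive, i.e., there exists δ > 0 such that for all x, y ∈ 𝒳, if d(g·x, g·y) < δ for all g ∈ G, then x = y; (b) the action is topologically conjugate to a subshift: there exist a finite set A, a closed subset F ⊆ A^G (product topology, A discrete) invariant under the translation G-action defined by (g·w)(h) = w(hg), and a G-equivariant homeomorphism h : 𝒳 → F. -/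
/-!
An expansive action is coded by the itineraries `h ↦ c (h • x)` of points with respect to a finite
clopen colouring `c` of `X` whose colour classes have diameter below the expansivity constant `δ`
(`exists_coloring`; it exists because `X` is compact and zero-dimensional). Points with the same
itinerary satisfy `dist (g • x) (g • y) < δ` for all `g`, so they coincide; hence the itinerary map
is a continuous injection of a compact space into a Hausdorff space, i.e. a homeomorphism onto its
closed image.

Conversely, a conjugacy `e` onto a subshift is determined by its coordinate at `1`, since
`e x g = e (g • x) 1`. This coordinate is a finite colouring with open classes, and a Lebesgue
number of the resulting cover is an expansivity constant.
-/

/-- A compact totally disconnected metric space has a continuous colouring by finitely many colours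
in which any two points of the same colour are `δ`-close. -/
theorem exists_coloring {X : Type*} [MetricSpace X] [CompactSpace X] [TotallyDisconnectedSpace X]
    {δ : ℝ} (hδ : 0 < δ) :
    ∃ (m : ℕ) (c : X → Fin m), Continuous c ∧ ∀ x y, c x = c y → dist x y < δ := by
  classical
  have h : ∀ x : X, ∃ V : Set X, IsClopen V ∧ x ∈ V ∧ V ⊆ Metric.ball x (δ / 2) := fun x =>
    compact_exists_isClopen_in_isOpen Metric.isOpen_ball (Metric.mem_ball_self (half_pos hδ))
  choose V hV hxV hVb using h
  obtain ⟨t, ht⟩ := isCompact_univ.elim_finite_subcover V (fun x => (hV x).isOpen)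
    (fun x _ => Set.mem_iUnion.2 ⟨x, hxV x⟩)
  -- The colour of a point records which members of the finite clopen cover contain it.
  let b : X → (t → Bool) := fun x i => decide (x ∈ V i)
  have hb : Continuous b := continuous_pi fun i => by
    refine (continuous_bool_rng true).2 ?_
    convert hV i.1 using 1
    ext x
    simp [b]
  let E := Fintype.equivFin (t → Bool)
  refine ⟨_, fun x => E (b x), continuous_of_discreteTopology.comp hb, fun x y hxy => ?_⟩
  have hxy' : b x = b y := E.injective hxy
  obtain ⟨i, hi, hx⟩ := Set.mem_iUnion₂.1 (ht (Set.mem_univ x))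
  have hy : y ∈ V i := by
    have := congrFun hxy' ⟨i, hi⟩
    simpa [b, hx] using this
  have h1 := Metric.mem_ball.1 (hVb i hx)
  have h2 := Metric.mem_ball.1 (hVb i hy)
  linarith [dist_triangle_right x y i]

/-- An action of a finitely generated group by homeomorphisms on a Cantor set is expansive
if and only if it is topologically conjugate to a subshift `F ⊆ A^G` with the translation
action, via a `G`-equivariant homeomorphism. -/
theorem group_action_expansive_iff_subshift {G : Type*} [Group G] [Group.FG G]
    {X : Type*} [MetricSpace X] [CompactSpace X] [TotallyDisconnectedSpace X] [Nonempty X]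
    (hperf : Perfect (Set.univ : Set X)) [MulAction G X]
    (hcont : ∀ g : G, Continuous fun x : X => g • x) :
    (∃ δ : ℝ, 0 < δ ∧ ∀ x y : X, (∀ g : G, dist (g • x) (g • y) < δ) → x = y) ↔
      ∃ (m : ℕ) (F : Set (G → Fin m)),
        IsClosed F ∧ (∀ w ∈ F, ∀ g : G, (fun h : G => w (h * g)) ∈ F) ∧
        ∃ e : X ≃ₜ F, ∀ (g : G) (x : X),
          (e (g • x) : G → Fin m) = fun h : G => (e x : G → Fin m) (h * g) := by
  constructor
  · rintro ⟨δ, hδ, hexp⟩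
    obtain ⟨m, c, hc, hcδ⟩ := exists_coloring (X := X) hδ
    let φ : X → G → Fin m := fun x h => c (h • x)
    have hφ : Continuous φ := continuous_pi fun h => hc.comp (hcont h)
    have hinj : Function.Injective φ := fun x y hxy =>
      hexp x y fun g => hcδ _ _ (congrFun hxy g)
    have hemb := hφ.isClosedEmbedding hinj
    have heq : ∀ (g : G) (x : X), φ (g • x) = fun h => φ x (h * g) := fun g x => by
      funext h
      simp only [φ, mul_smul]
    refine ⟨m, Set.range φ, hemb.isClosed_range, ?_, hemb.isEmbedding.toHomeomorph, heq⟩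
    rintro _ ⟨x, rfl⟩ g
    exact ⟨g • x, heq g x⟩
  · rintro ⟨m, F, -, -, e, he⟩
    let c : X → Fin m := fun x => (e x : G → Fin m) 1
    have hc : Continuous c :=
      (continuous_apply (1 : G)).comp (continuous_subtype_val.comp e.continuous)
    obtain ⟨δ, hδ, hleb⟩ := lebesgue_number_lemma_of_metric (isCompact_univ (X := X))
      (c := fun i : Fin m => c ⁻¹' {i}) (fun i => (isOpen_discrete _).preimage hc)
      (fun x _ => Set.mem_iUnion.2 ⟨c x, rfl⟩)
    refine ⟨δ, hδ, fun x y hxy => e.injective (Subtype.ext (funext fun g => ?_))⟩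
    have hcg : ∀ z : X, c (g • z) = (e z : G → Fin m) g := fun z => by
      simp only [c, he, one_mul]
    rw [← hcg x, ← hcg y]
    obtain ⟨i, hi⟩ := hleb (g • x) (Set.mem_univ _)
    have h1 : c (g • x) = i := hi (Metric.mem_ball_self hδ)
    have h2 : c (g • y) = i := hi (Metric.mem_ball'.2 (hxy g))
    rw [h1, h2]
end

section
/- Let γ : ℕ → ℝ be a nondecreasing function with γ(k) ≥ 1 for all k and limₙ→∞ γ(n)^{1/n} = 1. Then for every l ∈ ℕ, the Cesàro-type averages satisfy limₙ→∞ (1/(n−l)) · Σ_{k=l+1}^{n} (1 − γ(k−l)/γ(k)) = 0 (the limit taken over n > l). -/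
open Filter

/-!
Put `a = log γ`, a nondecreasing nonnegative sequence with `a n / n → 0`. Since `1 - x ≤ -log x`,
each summand is at most `a k - a (k - l)`. These increments telescope (`sum_shift_sub_le`), so the
whole sum is at most `l * a n`, and dividing by `n - l` gives something that tends to `0`.
-/

lemma sum_shift_sub_le (a : ℕ → ℝ) (hm : Monotone a) (h0 : ∀ k, 0 ≤ a k) (l m : ℕ) :
    ∑ j ∈ Finset.range m, (a (j + 1 + l) - a (j + 1)) ≤ l * a (m + l) := by
  induction l with
  | zero => simp
  | succ l ih =>
    have h1 : ∑ j ∈ Finset.range m, (a (j + 1 + (l + 1)) - a (j + 1)) =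
        ∑ j ∈ Finset.range m, (a (j + 1 + l + 1) - a (j + l + 1)) +
        ∑ j ∈ Finset.range m, (a (j + 1 + l) - a (j + 1)) := by
      rw [← Finset.sum_add_distrib]
      refine Finset.sum_congr rfl fun j _ => ?_
      rw [show j + l + 1 = j + 1 + l by ring, ← add_assoc]
      ring
    have h2 : ∑ j ∈ Finset.range m, (a (j + 1 + l + 1) - a (j + l + 1)) =
        a (m + l + 1) - a (0 + l + 1) :=
      Finset.sum_range_sub (fun j => a (j + l + 1)) m
    have h3 : (l : ℝ) * a (m + l) ≤ l * a (m + l + 1) :=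
      mul_le_mul_of_nonneg_left (hm (Nat.le_succ _)) (Nat.cast_nonneg l)
    have h4 := h0 (0 + l + 1)
    rw [h1, h2, ← add_assoc m l 1]
    push_cast
    linarith

/-- If `γ` is a nondecreasing function with `γ(k) ≥ 1` and subexponential growth
(`γ(n)^{1/n} → 1`), then the Cesàro averages of `1 − γ(k−l)/γ(k)` tend to `0`. -/
theorem cesaro_growth_limit (γ : ℕ → ℝ) (hmono : Monotone γ) (hγ1 : ∀ k, 1 ≤ γ k)
    (hsub : Tendsto (fun n : ℕ => γ n ^ ((n : ℝ)⁻¹)) atTop (nhds 1)) :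
    ∀ l : ℕ, Tendsto
      (fun n : ℕ => (1 / ((n : ℝ) - (l : ℝ))) *
        ∑ k ∈ Finset.Icc (l + 1) n, (1 - γ (k - l) / γ k))
      atTop (nhds 0) := by
  intro l
  have hpos : ∀ k, 0 < γ k := fun k => one_pos.trans_le (hγ1 k)
  have hlog : Tendsto (fun n : ℕ => (n : ℝ)⁻¹ * Real.log (γ n)) atTop (nhds 0) := by
    have h := hsub.log one_ne_zero
    rw [Real.log_one] at h
    exact h.congr fun n => Real.log_rpow (hpos n) _
  -- Substituting `n = m + l` turns the weight into `1 / m` and removes the truncated subtraction.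
  rw [← tendsto_add_atTop_iff_nat l]
  have hsum : ∀ m : ℕ, ∑ k ∈ Finset.Icc (l + 1) (m + l), (1 - γ (k - l) / γ k) =
      ∑ j ∈ Finset.range m, (1 - γ (j + 1) / γ (j + 1 + l)) := by
    intro m
    rw [← Finset.Ico_add_one_right_eq_Icc, Finset.sum_Ico_eq_sum_range,
      show m + l + 1 - (l + 1) = m by omega]
    refine Finset.sum_congr rfl fun j _ => ?_
    rw [show l + 1 + j = j + 1 + l by ring, Nat.add_sub_cancel]
  have hbound : Tendsto (fun m : ℕ => (1 / (m : ℝ)) * (l * Real.log (γ (m + l))))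
      atTop (nhds 0) := by
    have h1 := (tendsto_add_atTop_iff_nat l).2 hlog
    have h2 : Tendsto (fun m : ℕ => 1 + (l : ℝ) / m) atTop (nhds (1 + 0)) :=
      tendsto_const_nhds.add (tendsto_const_div_atTop_nhds_zero_nat _)
    have h3 := (h1.mul h2).const_mul (l : ℝ)
    rw [zero_mul, mul_zero] at h3
    refine h3.congr' ?_
    filter_upwards [eventually_gt_atTop 0] with m hm
    have hm' : (0 : ℝ) < m := Nat.cast_pos.2 hm
    push_cast
    field_simp
  refine squeeze_zero (fun m => ?_) (fun m => ?_) hbound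
  · rw [hsum]
    push_cast
    rw [add_sub_cancel_right]
    refine mul_nonneg (by positivity) (Finset.sum_nonneg fun j _ => ?_)
    exact sub_nonneg.2 ((div_le_one (hpos _)).2 (hmono (Nat.le_add_right _ _)))
  · rw [hsum]
    push_cast
    rw [add_sub_cancel_right]
    refine mul_le_mul_of_nonneg_left ?_ (by positivity)
    refine le_trans (Finset.sum_le_sum fun j _ => ?_)
      (sum_shift_sub_le (fun k => Real.log (γ k))
        (fun i j hij => Real.log_le_log (hpos i) (hmono hij))
        (fun k => Real.log_nonneg (hγ1 k)) l m)
    have h := Real.log_le_sub_one_of_pos (div_pos (hpos (j + 1)) (hpos (j + 1 + l)))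
    rw [Real.log_div (hpos _).ne' (hpos _).ne'] at h
    linarith
end
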